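/- Suppose the symmetric matrix P satisfies the linear matrix inequalities P − εI ⪰ 0, G ⪯ 0, and sₘ ≥ 0 for m = 1,…,n. Then for every p ∈ [1,∞), every initial condition with ‖a₀‖ ≤ δ_f = δ√(λmin(P)/λmax(P)), every continuous input f with sup_{0≤t≤τ} ‖f(t)‖ ≤ f_LMI = λmin(P)εδ/(λmax(P)‖2P‖), and every continuously differentiable solution a : [0,τ] → ℝⁿ of ȧ(t) = La(t) + Υ(a(t)) + f(t) with a(0) = a₀ and output y(t) = a(t), the truncated output satisfies ‖y_τ‖_{Lp} ≤ γ‖f_τ‖_{Lp} + β, where γ = λmax(P)‖2P‖/(λmin(P)ε) and β = ‖a₀‖√(λmax(P)/λmin(P)) · (2λmax(P)/(εp))^{1/p}. -/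

import Mathlib

/-!
The proof is a Lyapunov argument with `V = aᵀPa`.

*Dissipation.* Along `(a, Υ(a))` the lossless conditions kill the multiplier terms of the LMI, and
Cauchy–Schwarz bounds `Υₘ(a)²` by `‖a‖²‖Rₘa‖²`. Hence (`lmi_dissipation`)
`V' ≤ -ε‖a‖² + ‖2P‖‖a‖‖f‖ + (‖a‖² - δ²) Q(a)` with `Q(a) = Σ sₘ‖Rₘa‖² ≥ 0`.

*Invariance.* The last term is harmless as long as `‖a‖ ≤ δ`, which follows once the ellipsoid
`V ≤ λmin(P)δ²` is known to be invariant. The smallness of `f` makes the first two terms nonpositive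
outside the ellipsoid, but only weakly so; there the last term is at most a constant times
`V - λmin(P)δ²`, so a Grönwall-type barrier closes the argument (`sublevel_invariant`).

*Gain.* With `α = ε / (2λmax)`, the function `w = √(V / λmin)` satisfies `‖a‖ ≤ w` and
`w' ≤ -α w + ‖2P‖ / (2λmin) ‖f‖`, except that `w` need not be differentiable where `V = 0`; it is
therefore replaced by `√(V / λmin + r²)`, at the cost of an extra term `α r`, and `r → 0` at the end
(`sqrt_deriv_le`). Integrating `(w ^ p)'` and applying Hölder gives an inequality
`X ^ p ≤ A ^ p + B X ^ (p - 1)` for `X = ‖w‖_p`, which implies `X ≤ A + B` (`scalar_gain`). This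
replaces the variation of constants formula and Young's convolution inequality.
-/

noncomputable section

open Matrix Set MeasureTheory

/-- Euclidean norm on `Fin n → ℝ`. -/
def eNorm {n : ℕ} (a : Fin n → ℝ) : ℝ := Real.sqrt (∑ i, a i ^ 2)

/-- Truncation of a signal: equals `g` on `(-∞, τ]` (in particular on `[0, τ]`) and `0` for `t > τ`. -/
def trunc {E : Type*} [Zero E] (τ : ℝ) (g : ℝ → E) : ℝ → E := fun t => if t ≤ τ then g t else 0

/-- The `L∞` norm of a vector-valued signal on `[0, ∞)`: `sup_{t ≥ 0} ‖g t‖`. -/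
def eLinf {n : ℕ} (g : ℝ → Fin n → ℝ) : ℝ := ⨆ t : Set.Ici (0:ℝ), eNorm (g t.1)

/-- The `Lp` norm of a vector-valued signal on `[0, ∞)`: `(∫₀^∞ ‖g t‖^p dt)^(1/p)`. -/
def eLp {n : ℕ} (p : ℝ) (g : ℝ → Fin n → ℝ) : ℝ :=
  (∫ t in Set.Ioi (0:ℝ), eNorm (g t) ^ p) ^ (1/p)

/-- Smallest eigenvalue of a symmetric matrix, via its Rayleigh quotient characterization. -/
def lamMin {n : ℕ} (P : Matrix (Fin n) (Fin n) ℝ) : ℝ :=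
  sInf {r | ∃ a : Fin n → ℝ, eNorm a = 1 ∧ r = a ⬝ᵥ P.mulVec a}

/-- Largest eigenvalue of a symmetric matrix, via its Rayleigh quotient characterization. -/
def lamMax {n : ℕ} (P : Matrix (Fin n) (Fin n) ℝ) : ℝ :=
  sSup {r | ∃ a : Fin n → ℝ, eNorm a = 1 ∧ r = a ⬝ᵥ P.mulVec a}

/-- Spectral norm of a matrix: the induced Euclidean operator norm. -/
def specNorm {n : ℕ} (M : Matrix (Fin n) (Fin n) ℝ) : ℝ :=
  sSup {r | ∃ a : Fin n → ℝ, eNorm a = 1 ∧ r = eNorm (M.mulVec a)}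

/-- The quadratic nonlinearity `Υ`, with components `Υₘ(a) = aᵀ Rₘ a`. -/
def Ups {n : ℕ} (R : Fin n → Matrix (Fin n) (Fin n) ℝ) (a : Fin n → ℝ) : Fin n → ℝ :=
  fun m => a ⬝ᵥ (R m).mulVec a


/-- The 2n×2n block LMI matrix
`G = [[LᵀP + PL + εI + Σₘ sₘδ²RₘRₘ, P + Σᵢ μᵢMᵢ], [P + Σᵢ μᵢMᵢᵀ, −Σₘ sₘeₘeₘᵀ + Σⱼ κⱼTⱼ]]`,
where `M₀ = I`, `Mᵢ = eᵢvᵀ` and `Tⱼ = eⱼvᵀ + veⱼᵀ`. -/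
def Gmat {n : ℕ} (L : Matrix (Fin n) (Fin n) ℝ) (R : Fin n → Matrix (Fin n) (Fin n) ℝ)
    (v : Fin n → ℝ) (ε δ : ℝ) (μ : Fin (n+1) → ℝ) (κ s : Fin n → ℝ)
    (P : Matrix (Fin n) (Fin n) ℝ) : Matrix (Fin n ⊕ Fin n) (Fin n ⊕ Fin n) ℝ :=
  Matrix.fromBlocks
    (Lᵀ * P + P * L + ε • (1 : Matrix (Fin n) (Fin n) ℝ) + ∑ m, (s m * δ ^ 2) • (R m * R m))
    (P + (μ 0 • (1 : Matrix (Fin n) (Fin n) ℝ) +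
      ∑ i : Fin n, μ i.succ • Matrix.vecMulVec (Pi.single i (1:ℝ)) v))
    (P + (μ 0 • (1 : Matrix (Fin n) (Fin n) ℝ) +
      ∑ i : Fin n, μ i.succ • Matrix.vecMulVec v (Pi.single i (1:ℝ))))
    (-(∑ m, s m • Matrix.vecMulVec (Pi.single m (1:ℝ)) (Pi.single m (1:ℝ))) +
      ∑ j, κ j • (Matrix.vecMulVec (Pi.single j (1:ℝ)) v + Matrix.vecMulVec v (Pi.single j (1:ℝ))))


/-! ### Euclidean norm and Rayleigh quotients -/

lemma eNorm_nonneg {n : ℕ} (a : Fin n → ℝ) : 0 ≤ eNorm a := Real.sqrt_nonneg _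

lemma eNorm_sq {n : ℕ} (a : Fin n → ℝ) : eNorm a ^ 2 = a ⬝ᵥ a := by
  unfold eNorm
  rw [Real.sq_sqrt (Finset.sum_nonneg fun i _ => sq_nonneg _)]
  simp [dotProduct, sq]

lemma eNorm_smul {n : ℕ} (c : ℝ) (a : Fin n → ℝ) : eNorm (c • a) = |c| * eNorm a := by
  unfold eNorm
  simp only [Pi.smul_apply, smul_eq_mul, mul_pow, ← Finset.mul_sum]
  rw [Real.sqrt_mul (sq_nonneg _), Real.sqrt_sq_eq_abs]

lemma dot_le_eNorm {n : ℕ} (a b : Fin n → ℝ) : a ⬝ᵥ b ≤ eNorm a * eNorm b :=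
  Real.sum_mul_le_sqrt_mul_sqrt _ _ _

lemma continuous_eNorm {n : ℕ} : Continuous (eNorm : (Fin n → ℝ) → ℝ) := by
  unfold eNorm
  fun_prop

lemma exists_eNorm_mulVec_le {n : ℕ} (M : Matrix (Fin n) (Fin n) ℝ) :
    ∃ C, ∀ a, eNorm (M *ᵥ a) ≤ C * eNorm a := by
  refine ⟨Real.sqrt (∑ i, ∑ j, M i j ^ 2), fun a => ?_⟩
  unfold eNorm
  rw [← Real.sqrt_mul (by positivity), Finset.sum_mul]
  exact Real.sqrt_le_sqrt (Finset.sum_le_sum fun i _ => by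
    simpa [mulVec, dotProduct] using Finset.sum_mul_sq_le_sq_mul_sq Finset.univ (M i) a)

/-- A nonzero vector is its norm times a unit vector. -/
lemma exists_unit_smul {n : ℕ} {a : Fin n → ℝ} (ha : eNorm a ≠ 0) :
    ∃ u, eNorm u = 1 ∧ a = eNorm a • u := by
  refine ⟨(eNorm a)⁻¹ • a, ?_, ?_⟩
  · rw [eNorm_smul, abs_inv, abs_of_nonneg (eNorm_nonneg a), inv_mul_cancel₀ ha]
  · rw [smul_smul, mul_inv_cancel₀ ha, one_smul]

lemma eq_zero_of_eNorm {n : ℕ} {a : Fin n → ℝ} (ha : eNorm a = 0) : a = 0 := by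
  have := eNorm_sq a
  rw [ha] at this
  exact dotProduct_self_eq_zero.mp (by simpa using this.symm)

lemma eNorm_mulVec_le_specNorm {n : ℕ} (M : Matrix (Fin n) (Fin n) ℝ) (a : Fin n → ℝ) :
    eNorm (M *ᵥ a) ≤ specNorm M * eNorm a := by
  by_cases ha : eNorm a = 0
  · rw [eq_zero_of_eNorm ha]; simp [eNorm]
  obtain ⟨u, hu, hau⟩ := exists_unit_smul ha
  obtain ⟨C, hC⟩ := exists_eNorm_mulVec_le M
  have : eNorm (M *ᵥ u) ≤ specNorm M :=
    le_csSup ⟨C, by rintro r ⟨b, hb, rfl⟩; simpa [hb] using hC b⟩ ⟨u, hu, rfl⟩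
  have h2 : eNorm (M *ᵥ a) = eNorm a * eNorm (M *ᵥ u) := by
    conv_lhs => rw [hau, mulVec_smul, eNorm_smul, abs_of_nonneg (eNorm_nonneg a)]
  rw [h2, mul_comm]
  exact mul_le_mul_of_nonneg_right this (eNorm_nonneg a)

lemma specNorm_nonneg {n : ℕ} (M : Matrix (Fin n) (Fin n) ℝ) : 0 ≤ specNorm M :=
  Real.sSup_nonneg (by rintro r ⟨a, _, rfl⟩; exact eNorm_nonneg _)

lemma quad_smul {n : ℕ} (M : Matrix (Fin n) (Fin n) ℝ) (c : ℝ) (a : Fin n → ℝ) :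
    (c • a) ⬝ᵥ M *ᵥ (c • a) = c ^ 2 * (a ⬝ᵥ M *ᵥ a) := by
  rw [mulVec_smul, smul_dotProduct, dotProduct_smul, smul_eq_mul, smul_eq_mul]; ring

lemma exists_abs_quad_le {n : ℕ} (M : Matrix (Fin n) (Fin n) ℝ) :
    ∃ C, ∀ u, eNorm u = 1 → |u ⬝ᵥ M *ᵥ u| ≤ C := by
  obtain ⟨C, hC⟩ := exists_eNorm_mulVec_le M
  refine ⟨C, fun u hu => abs_le.mpr ⟨?_, ?_⟩⟩
  · have h1 := dot_le_eNorm (-u) (M *ᵥ u)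
    have h2 : eNorm (-u) = 1 := by simpa [eNorm] using hu
    have h3 := hC u
    rw [neg_dotProduct, h2] at h1
    rw [hu] at h3
    linarith
  · have h1 := dot_le_eNorm u (M *ᵥ u)
    have h3 := hC u
    rw [hu] at h1 h3
    linarith

lemma quad_le_lamMax {n : ℕ} (P : Matrix (Fin n) (Fin n) ℝ) (a : Fin n → ℝ) :
    a ⬝ᵥ P *ᵥ a ≤ lamMax P * eNorm a ^ 2 := by
  by_cases ha : eNorm a = 0
  · rw [eq_zero_of_eNorm ha]; simp [eNorm]
  obtain ⟨u, hu, hau⟩ := exists_unit_smul ha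
  obtain ⟨C, hC⟩ := exists_abs_quad_le P
  have : u ⬝ᵥ P *ᵥ u ≤ lamMax P :=
    le_csSup ⟨C, by rintro r ⟨b, hb, rfl⟩; exact (abs_le.mp (hC b hb)).2⟩ ⟨u, hu, rfl⟩
  have h2 : a ⬝ᵥ P *ᵥ a = eNorm a ^ 2 * (u ⬝ᵥ P *ᵥ u) := by
    conv_lhs => rw [hau, quad_smul]
  rw [h2, mul_comm]
  gcongr

lemma lamMin_le_quad {n : ℕ} (P : Matrix (Fin n) (Fin n) ℝ) (a : Fin n → ℝ) :
    lamMin P * eNorm a ^ 2 ≤ a ⬝ᵥ P *ᵥ a := by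
  by_cases ha : eNorm a = 0
  · rw [eq_zero_of_eNorm ha]; simp [eNorm]
  obtain ⟨u, hu, hau⟩ := exists_unit_smul ha
  obtain ⟨C, hC⟩ := exists_abs_quad_le P
  have : lamMin P ≤ u ⬝ᵥ P *ᵥ u :=
    csInf_le ⟨-C, by rintro r ⟨b, hb, rfl⟩; exact (abs_le.mp (hC b hb)).1⟩ ⟨u, hu, rfl⟩
  have h2 : a ⬝ᵥ P *ᵥ a = eNorm a ^ 2 * (u ⬝ᵥ P *ᵥ u) := by
    conv_lhs => rw [hau, quad_smul]
  rw [h2, mul_comm]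
  gcongr

lemma exists_unit {n : ℕ} (hn : 0 < n) : ∃ u : Fin n → ℝ, eNorm u = 1 := by
  refine ⟨Pi.single ⟨0, hn⟩ 1, ?_⟩
  have h : eNorm (Pi.single ⟨0, hn⟩ 1 : Fin n → ℝ) ^ 2 = 1 := by rw [eNorm_sq]; simp
  exact (pow_eq_one_iff_of_nonneg (eNorm_nonneg _) two_ne_zero).mp h

lemma lamMin_pos {n : ℕ} (hn : 0 < n) {P : Matrix (Fin n) (Fin n) ℝ} {ε : ℝ} (hε : 0 < ε)
    (h : (P - ε • (1 : Matrix (Fin n) (Fin n) ℝ)).PosSemidef) : 0 < lamMin P := by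
  obtain ⟨u, hu⟩ := exists_unit hn
  refine lt_of_lt_of_le hε (le_csInf ⟨_, u, hu, rfl⟩ ?_)
  rintro r ⟨a, ha, rfl⟩
  have := h.dotProduct_mulVec_nonneg a
  simp only [star_trivial, sub_mulVec, smul_mulVec, one_mulVec, dotProduct_sub,
    dotProduct_smul, ← eNorm_sq, ha, smul_eq_mul] at this
  linarith

lemma lamMin_le_lamMax {n : ℕ} (hn : 0 < n) (P : Matrix (Fin n) (Fin n) ℝ) :
    lamMin P ≤ lamMax P := by
  obtain ⟨u, hu⟩ := exists_unit hn
  have h1 := quad_le_lamMax P u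
  have h2 := lamMin_le_quad P u
  rw [hu] at h1 h2
  linarith

/-! ### Dissipation from the LMI -/

lemma transpose_mul_quad {n : ℕ} (A B : Matrix (Fin n) (Fin n) ℝ) (a b : Fin n → ℝ) :
    a ⬝ᵥ (Aᵀ * B) *ᵥ b = (A *ᵥ a) ⬝ᵥ (B *ᵥ b) := by
  rw [← mulVec_mulVec, dotProduct_mulVec, vecMul_transpose]

/-- The LMI evaluated along `(a, z)` with `z = Υ(a)`. The multipliers `μ`, `κ` vanish by the lossless
conditions, and Cauchy–Schwarz gives `zₘ² ≤ ‖a‖²‖Rₘa‖²`; what remains is a dissipation inequality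
whose error term has the sign of `‖a‖² - δ²`. -/
lemma lmi_dissipation {n : ℕ} {L : Matrix (Fin n) (Fin n) ℝ}
    {R : Fin n → Matrix (Fin n) (Fin n) ℝ} (hRsym : ∀ m, (R m)ᵀ = R m) {v : Fin n → ℝ}
    (hloss : ∀ a : Fin n → ℝ, a ⬝ᵥ Ups R a = 0) (hlossv : ∀ a : Fin n → ℝ, v ⬝ᵥ Ups R a = 0)
    {ε δ : ℝ} {μ : Fin (n+1) → ℝ} {κ s : Fin n → ℝ} {P : Matrix (Fin n) (Fin n) ℝ}
    (hPsym : Pᵀ = P) (hG : (-(Gmat L R v ε δ μ κ s P)).PosSemidef) (hs : ∀ m, 0 ≤ s m)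
    (a : Fin n → ℝ) :
    2 * (P *ᵥ a ⬝ᵥ (L *ᵥ a + Ups R a)) ≤
      -ε * eNorm a ^ 2 + (eNorm a ^ 2 - δ ^ 2) * ∑ m, s m * eNorm (R m *ᵥ a) ^ 2 := by
  have h := hG.dotProduct_mulVec_nonneg (Sum.elim a (Ups R a))
  have h1 := hloss a
  have h2 := hlossv a
  have hz : ∑ m, s m * Ups R a m ^ 2 ≤ eNorm a ^ 2 * ∑ m, s m * eNorm (R m *ᵥ a) ^ 2 := by
    rw [Finset.mul_sum]
    refine Finset.sum_le_sum fun m _ => ?_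
    have : Ups R a m ^ 2 ≤ eNorm a ^ 2 * eNorm (R m *ᵥ a) ^ 2 := by
      rw [eNorm_sq, eNorm_sq]
      simpa [Ups, dotProduct, sq] using
        Finset.sum_mul_sq_le_sq_mul_sq Finset.univ a (R m *ᵥ a)
    have := mul_le_mul_of_nonneg_left this (hs m)
    linarith
  generalize Ups R a = z at *
  have hPL : a ⬝ᵥ (P * L) *ᵥ a = (P *ᵥ a) ⬝ᵥ (L *ᵥ a) := by
    rw [← transpose_mul_quad, hPsym]
  have hLP : a ⬝ᵥ (Lᵀ * P) *ᵥ a = (P *ᵥ a) ⬝ᵥ (L *ᵥ a) := by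
    rw [transpose_mul_quad, dotProduct_comm]
  have hPz : a ⬝ᵥ P *ᵥ z = P *ᵥ a ⬝ᵥ z := by
    rw [dotProduct_mulVec, ← mulVec_transpose, hPsym]
  have hPz' : z ⬝ᵥ P *ᵥ a = P *ᵥ a ⬝ᵥ z := dotProduct_comm _ _
  have hR : ∀ m, a ⬝ᵥ (R m * R m) *ᵥ a = eNorm (R m *ᵥ a) ^ 2 := by
    intro m
    rw [eNorm_sq, ← transpose_mul_quad, hRsym]
  have h1' : z ⬝ᵥ a = 0 := by rw [dotProduct_comm, h1]
  have h2' : z ⬝ᵥ v = 0 := by rw [dotProduct_comm, h2]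
  simp only [star_trivial, neg_mulVec, dotProduct_neg, Gmat, fromBlocks_mulVec,
    sumElim_dotProduct_sumElim, Function.comp_def, Sum.elim_inl, Sum.elim_inr, add_mulVec,
    smul_mulVec, one_mulVec, sum_mulVec, vecMulVec_mulVec, dotProduct_add, dotProduct_smul,
    dotProduct_sum, hPL, hLP, hPz, hPz', hR, h1, h2, h1', h2', smul_eq_mul, ← eNorm_sq,
    op_smul_eq_smul, single_one_dotProduct,
    dotProduct_single_one, mul_zero, zero_smul, smul_zero, Finset.sum_const_zero,
    add_zero, zero_add] at h
  have e1 : ∑ m, s m * δ ^ 2 * eNorm (R m *ᵥ a) ^ 2 =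
      δ ^ 2 * ∑ m, s m * eNorm (R m *ᵥ a) ^ 2 := by
    rw [Finset.mul_sum]; exact Finset.sum_congr rfl fun _ _ => by ring
  have e2 : ∑ m, s m * (z m * z m) = ∑ m, s m * z m ^ 2 := by simp [sq]
  rw [e1, e2] at h
  rw [dotProduct_add]
  linarith

/-! ### The scalar Lp estimate -/

/-- Turns the implicit bound on `X = ‖w‖_p`, as produced by Hölder's inequality, into an explicit
one that is additive in the two sources `A` (initial value) and `B` (input). -/
lemma le_add_of_rpow_le {p A B X : ℝ} (hp : 1 ≤ p) (hA : 0 ≤ A) (hB : 0 ≤ B)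
    (h : X ^ p ≤ A ^ p + B * X ^ (p - 1)) : X ≤ A + B := by
  by_contra! hlt
  have hX0 : 0 < X := by linarith
  have hXp : X ^ p = X ^ (p - 1) * X := by
    rw [← Real.rpow_add_one hX0.ne']; ring_nf
  have hpos : 0 < X ^ (p - 1) := Real.rpow_pos_of_pos hX0 _
  have hAp : A ^ p ≤ A * X ^ (p - 1) := by
    rcases hA.eq_or_lt with rfl | hA0
    · rw [Real.zero_rpow (by linarith)]; simp
    · have : A ^ p = A * A ^ (p - 1) := by
        rw [mul_comm, ← Real.rpow_add_one hA0.ne']; ring_nf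
      rw [this]
      have : A ^ (p - 1) ≤ X ^ (p - 1) := Real.rpow_le_rpow hA (by linarith) (by linarith)
      gcongr
  nlinarith

/-- Hölder's inequality on `[0, τ]` for the pair `w ^ (p - 1)`, `g`, including `p = 1`. -/
lemma holder_rpow_sub_one {τ p : ℝ} (hp : 1 ≤ p) {w g : ℝ → ℝ}
    (hw : ContinuousOn w (Icc 0 τ)) (hw0 : ∀ t ∈ Icc 0 τ, 0 < w t)
    (hg : ContinuousOn g (Icc 0 τ)) (hg0 : ∀ t ∈ Icc 0 τ, 0 ≤ g t) :
    ∫ t in Ioc 0 τ, w t ^ (p - 1) * g t ≤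
      ((∫ t in Ioc 0 τ, w t ^ p) ^ (1 / p)) ^ (p - 1) * (∫ t in Ioc 0 τ, g t ^ p) ^ (1 / p) := by
  rcases hp.eq_or_lt with rfl | hp1
  · simp
  have hpq := Real.HolderConjugate.conjExponent hp1
  set q := Real.conjExponent p with hq
  have hmem : ∀ {h : ℝ → ℝ} {r : ENNReal}, ContinuousOn h (Icc 0 τ) →
      MemLp h r (volume.restrict (Ioc 0 τ)) := by
    intro h r hh
    obtain ⟨C, hC⟩ := isCompact_Icc.exists_bound_of_continuousOn hh
    refine MemLp.of_bound ((hh.mono Ioc_subset_Icc_self).aestronglyMeasurable measurableSet_Ioc) C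
      ((ae_restrict_iff' measurableSet_Ioc).mpr (.of_forall fun t ht => hC t (Ioc_subset_Icc_self ht)))
  have hwc : ContinuousOn (fun t => w t ^ (p - 1)) (Icc 0 τ) :=
    hw.rpow_const fun t ht => Or.inl (hw0 t ht).ne'
  have key := integral_mul_le_Lp_mul_Lq_of_nonneg (μ := volume.restrict (Ioc 0 τ)) hpq.symm
    (f := fun t => w t ^ (p - 1)) (g := g)
    ((ae_restrict_iff' measurableSet_Ioc).mpr (.of_forall fun t ht =>
      (Real.rpow_pos_of_pos (hw0 t (Ioc_subset_Icc_self ht)) _).le))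
    ((ae_restrict_iff' measurableSet_Ioc).mpr (.of_forall fun t ht =>
      hg0 t (Ioc_subset_Icc_self ht))) (hmem hwc) (hmem hg)
  have hpqe : (p - 1) * q = p := hpq.sub_one_mul_conj
  have e : ∫ t in Ioc 0 τ, (w t ^ (p - 1)) ^ q = ∫ t in Ioc 0 τ, w t ^ p := by
    refine setIntegral_congr_fun measurableSet_Ioc fun t ht => ?_
    rw [← Real.rpow_mul (hw0 t (Ioc_subset_Icc_self ht)).le, hpqe]
  have hI : 0 ≤ ∫ t in Ioc 0 τ, w t ^ p := setIntegral_nonneg measurableSet_Ioc fun t ht =>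
    (Real.rpow_pos_of_pos (hw0 t (Ioc_subset_Icc_self ht)) _).le
  have hexp : 1 / q = 1 / p * (p - 1) := by
    have := hpq.symm.pos
    have : 0 < p := by linarith
    field_simp
    linarith
  rwa [e, hexp, Real.rpow_mul hI] at key

/-- `Lᵖ` gain of the scalar differential inequality `w' ≤ -α w + k g + c`, obtained by integrating
`(w ^ p)'` instead of solving and convolving. -/
lemma scalar_gain {τ α k c p : ℝ} (hτ : 0 < τ) (hα : 0 < α) (hk : 0 ≤ k) (hc : 0 ≤ c) (hp : 1 ≤ p)
    {w w' g : ℝ → ℝ} (hw : ContinuousOn w (Icc 0 τ)) (hw0 : ∀ t ∈ Icc 0 τ, 0 < w t)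
    (hd : ∀ t ∈ Ioo 0 τ, HasDerivAt w (w' t) t)
    (hg : ContinuousOn g (Icc 0 τ)) (hg0 : ∀ t ∈ Icc 0 τ, 0 ≤ g t)
    (hle : ∀ t ∈ Ioo 0 τ, w' t ≤ -α * w t + k * g t + c) :
    (∫ t in Ioc 0 τ, w t ^ p) ^ (1 / p) ≤
      w 0 * (1 / (α * p)) ^ (1 / p)
        + (k * (∫ t in Ioc 0 τ, g t ^ p) ^ (1 / p) + c * τ ^ (1 / p)) / α := by
  have hp0 : 0 < p := by linarith
  have hwc : ∀ r : ℝ, ContinuousOn (fun t => w t ^ r) (Icc 0 τ) := fun r =>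
    hw.rpow_const fun t ht => Or.inl (hw0 t ht).ne'
  have hIntg : ∀ {h : ℝ → ℝ}, ContinuousOn h (Icc 0 τ) → IntegrableOn h (Ioc 0 τ) := fun hh =>
    hh.integrableOn_Icc.mono_set Ioc_subset_Icc_self
  have hI : 0 ≤ ∫ t in Ioc 0 τ, w t ^ p := setIntegral_nonneg measurableSet_Ioc fun t ht =>
    (Real.rpow_pos_of_pos (hw0 t (Ioc_subset_Icc_self ht)) _).le
  have hJ : 0 ≤ ∫ t in Ioc 0 τ, g t ^ p := setIntegral_nonneg measurableSet_Ioc fun t ht =>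
    Real.rpow_nonneg (hg0 t (Ioc_subset_Icc_self ht)) _
  have ftc := intervalIntegral.sub_le_integral_of_hasDeriv_right_of_le hτ.le (hwc p)
    (g' := fun t => w' t * p * w t ^ (p - 1))
    (φ := fun t => -(α * p) * w t ^ p + p * k * (w t ^ (p - 1) * g t)
      + p * c * (w t ^ (p - 1) * 1))
    (fun t ht => ((hd t ht).rpow_const
      (Or.inl (hw0 t (Ioo_subset_Icc_self ht)).ne')).hasDerivWithinAt)
    (by
      refine ContinuousOn.integrableOn_Icc ?_
      have := hwc p
      have := hwc (p - 1)
      fun_prop)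
    (by
      intro t ht
      have hpos := hw0 t (Ioo_subset_Icc_self ht)
      have hq : 0 < w t ^ (p - 1) := Real.rpow_pos_of_pos hpos _
      have hwp : w t ^ p = w t ^ (p - 1) * w t := by
        rw [← Real.rpow_add_one hpos.ne']; ring_nf
      have := mul_le_mul_of_nonneg_left (hle t ht) (mul_pos hp0 hq).le
      simp only [hwp]
      linarith)
  have i1 : IntegrableOn (fun t => w t ^ p) (Ioc 0 τ) := hIntg (hwc p)
  have i2 : IntegrableOn (fun t => w t ^ (p - 1) * g t) (Ioc 0 τ) := hIntg ((hwc (p - 1)).mul hg)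
  have i3 : IntegrableOn (fun t => w t ^ (p - 1) * 1) (Ioc 0 τ) :=
    hIntg ((hwc (p - 1)).mul continuousOn_const)
  rw [intervalIntegral.integral_of_le hτ.le,
    integral_add (f := fun t => -(α * p) * w t ^ p + p * k * (w t ^ (p - 1) * g t))
      ((i1.const_mul _).add (i2.const_mul _)) (i3.const_mul _),
    integral_add (i1.const_mul _) (i2.const_mul _),
    integral_const_mul, integral_const_mul, integral_const_mul] at ftc
  have H1 := holder_rpow_sub_one hp hw hw0 hg hg0
  have H2 := holder_rpow_sub_one (g := fun _ => (1:ℝ)) hp hw hw0 continuousOn_const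
    (fun _ _ => zero_le_one)
  have e1 : ∫ _ in Ioc 0 τ, (1:ℝ) ^ p = τ := by simp [hτ.le]
  rw [e1] at H2
  have hXp : ((∫ t in Ioc 0 τ, w t ^ p) ^ (1 / p)) ^ p = ∫ t in Ioc 0 τ, w t ^ p := by
    rw [← Real.rpow_mul hI, one_div, inv_mul_cancel₀ hp0.ne', Real.rpow_one]
  have hX0 : 0 ≤ (∫ t in Ioc 0 τ, w t ^ p) ^ (1 / p) := Real.rpow_nonneg hI _
  have hG0 : 0 ≤ (∫ t in Ioc 0 τ, g t ^ p) ^ (1 / p) := Real.rpow_nonneg hJ _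
  have hT0 : 0 ≤ τ ^ (1 / p) := Real.rpow_nonneg hτ.le _
  have hw00 := hw0 0 ⟨le_rfl, hτ.le⟩
  refine le_add_of_rpow_le hp (by positivity) (by positivity) ?_
  rw [hXp, Real.mul_rpow hw00.le (by positivity), ← Real.rpow_mul (by positivity), one_div p,
    inv_mul_cancel₀ hp0.ne', Real.rpow_one, ← one_div p]
  have hwτ : 0 ≤ w τ ^ p := (Real.rpow_pos_of_pos (hw0 τ ⟨hτ.le, le_rfl⟩) _).le
  have H1' := mul_le_mul_of_nonneg_left H1 (mul_nonneg hp0.le hk)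
  have H2' := mul_le_mul_of_nonneg_left H2 (mul_nonneg hp0.le hc)
  generalize (∫ t in Ioc 0 τ, w t ^ p) ^ (1 / p) = X at *
  generalize (∫ t in Ioc 0 τ, g t ^ p) ^ (1 / p) = G at *
  have hmul : α * p * (∫ t in Ioc 0 τ, w t ^ p) ≤
      α * p * (w 0 ^ p * (1 / (α * p)) + (k * G + c * τ ^ (1 / p)) / α * X ^ (p - 1)) := by
    have : α * p * (w 0 ^ p * (1 / (α * p)) + (k * G + c * τ ^ (1 / p)) / α * X ^ (p - 1))
      = w 0 ^ p + p * k * (X ^ (p - 1) * G) + p * c * (X ^ (p - 1) * τ ^ (1 / p)) := by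
      field_simp
      ring
    rw [this]
    linarith
  exact le_of_mul_le_mul_left hmul (by positivity)

/-! ### The Lyapunov function along a solution -/

lemma hasDerivWithinAt_quad {n : ℕ} {P : Matrix (Fin n) (Fin n) ℝ} (hPsym : Pᵀ = P)
    {a : ℝ → Fin n → ℝ} {a' : Fin n → ℝ} {S : Set ℝ} {t : ℝ} (h : HasDerivWithinAt a a' S t) :
    HasDerivWithinAt (fun t => a t ⬝ᵥ P *ᵥ a t) (2 * (P *ᵥ a t ⬝ᵥ a')) S t := by
  have h1 : HasDerivWithinAt (fun t => P *ᵥ a t) (P *ᵥ a') S t :=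
    (P.mulVecLin.toContinuousLinearMap.hasFDerivAt).comp_hasDerivWithinAt t h
  have h2 : HasDerivWithinAt (fun t => ∑ i, a t i * (P *ᵥ a t) i)
      (∑ i, (a' i * (P *ᵥ a t) i + a t i * (P *ᵥ a') i)) S t :=
    HasDerivWithinAt.fun_sum fun i _ =>
      (hasDerivWithinAt_pi.mp h i).mul (hasDerivWithinAt_pi.mp h1 i)
  refine h2.congr_deriv ?_
  rw [Finset.sum_add_distrib]
  change a' ⬝ᵥ P *ᵥ a t + a t ⬝ᵥ P *ᵥ a' = _
  have : a t ⬝ᵥ P *ᵥ a' = P *ᵥ a t ⬝ᵥ a' := by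
    rw [dotProduct_mulVec, ← mulVec_transpose, hPsym]
  rw [this, dotProduct_comm a']
  ring

/-- Forward invariance of a sublevel set `{V ≤ c}` for a differential inequality which is only
guaranteed to be dissipative up to an error `K * (V - c)` outside the set. The barrier
`c + η * exp ((K + 1) * t)` is compared with `V` and then `η → 0`. -/
lemma sublevel_invariant {τ c K : ℝ} {V V' : ℝ → ℝ}
    (hd : ∀ t ∈ Icc 0 τ, HasDerivWithinAt V (V' t) (Icc 0 τ) t) (h0 : V 0 ≤ c)
    (hle : ∀ t ∈ Icc 0 τ, c < V t → V' t ≤ K * (V t - c)) :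
    ∀ t ∈ Icc 0 τ, V t ≤ c := by
  intro t ht
  have key : ∀ η : ℝ, 0 < η → V t ≤ c + η * Real.exp ((K + 1) * t) := by
    intro η hη
    refine image_le_of_deriv_right_lt_deriv_boundary (f' := V')
      (B := fun t => c + η * Real.exp ((K + 1) * t))
      (B' := fun t => η * (Real.exp ((K + 1) * t) * (K + 1)))
      (fun x hx => (hd x hx).continuousWithinAt)
      (fun x hx => (hd x (Ico_subset_Icc_self hx)).mono_of_mem_nhdsWithin
        (Icc_mem_nhdsGE_of_mem hx)) ?_ ?_ ?_ ht
    · simp; linarith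
    · intro x
      have := ((hasDerivAt_id x).const_mul (K + 1)).exp.const_mul η |>.const_add c
      simpa using this
    · intro x hx hVx
      have hpos : 0 < η * Real.exp ((K + 1) * x) := by positivity
      have := hle x (Ico_subset_Icc_self hx) (by linarith)
      rw [hVx] at this
      linarith
  have hlim : Filter.Tendsto (fun η : ℝ => c + η * Real.exp ((K + 1) * t))
      (nhdsWithin 0 (Ioi 0)) (nhds c) := by
    have : Continuous fun η : ℝ => c + η * Real.exp ((K + 1) * t) := by fun_prop
    simpa using (this.tendsto 0).mono_left nhdsWithin_le_nhds
  exact ge_of_tendsto hlim (eventually_mem_nhdsWithin.mono fun η hη => key η hη)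

lemma eLp_trunc {n : ℕ} {τ p : ℝ} (hp : 1 ≤ p) (g : ℝ → Fin n → ℝ) :
    eLp p (trunc τ g) = (∫ t in Ioc 0 τ, eNorm (g t) ^ p) ^ (1 / p) := by
  unfold eLp
  congr 1
  have h0 : ∀ t ∈ Ioi (0:ℝ) \ Ioc 0 τ, eNorm (trunc τ g t) ^ p = 0 := by
    intro t ht
    have : ¬ t ≤ τ := fun h => ht.2 ⟨ht.1, h⟩
    have hp0 : p ≠ 0 := by linarith
    simp [trunc, this, eNorm, hp0]
  rw [setIntegral_eq_of_subset_of_forall_sdiff_eq_zero measurableSet_Ioi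
    (Ioc_subset_Ioi_self : Ioc 0 τ ⊆ Ioi 0) h0]
  refine setIntegral_congr_fun measurableSet_Ioc fun t ht => ?_
  simp [trunc, ht.2]

/-- The Lyapunov estimate in normalised form: `w = √(V / l + r²)` with `r > 0` is bounded away from
zero, so it is differentiable, and the dissipation inequality for `V` becomes linear in `w`. -/
lemma sqrt_deriv_le {V V' N F l m ε S r : ℝ} (hl : 0 < l) (hm : 0 < m) (hε : 0 < ε) (hS : 0 ≤ S)
    (hr : 0 < r) (hF : 0 ≤ F) (hlow : l * N ^ 2 ≤ V) (hup : V ≤ m * N ^ 2)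
    (hV' : V' ≤ -ε * N ^ 2 + S * N * F) :
    V' / l / (2 * √(V / l + r ^ 2)) ≤
      -(ε / (2 * m)) * √(V / l + r ^ 2) + S / (2 * l) * F + ε / (2 * m) * r := by
  have hVl : N ^ 2 ≤ V / l := by rw [le_div_iff₀ hl]; linarith
  set w := √(V / l + r ^ 2) with hw
  have hw2 : w ^ 2 = V / l + r ^ 2 := Real.sq_sqrt (by nlinarith)
  have hwr : r ≤ w := Real.le_sqrt_of_sq_le (by nlinarith)
  have hwN : N ≤ w := Real.le_sqrt_of_sq_le (by nlinarith)
  have hw0 : 0 < w := by linarith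
  have hVm : ε / m * V ≤ ε * N ^ 2 := by
    have := mul_le_mul_of_nonneg_left hup (div_pos hε hm).le
    have e : ε / m * (m * N ^ 2) = ε * N ^ 2 := by field_simp
    linarith
  have hV : V = l * (w ^ 2 - r ^ 2) := by rw [hw2]; field_simp; ring
  have hb : S * N * F ≤ S * w * F := by gcongr
  have hrw : r ^ 2 ≤ r * w := by nlinarith
  have h1 : V' ≤ -(ε / m) * (l * (w ^ 2 - r * w)) + S * w * F := by
    have : ε / m * (l * (w ^ 2 - r * w)) ≤ ε / m * V := by
      rw [hV]; gcongr
    linarith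
  rw [div_div, div_le_iff₀ (by positivity)]
  have e : (-(ε / (2 * m)) * w + S / (2 * l) * F + ε / (2 * m) * r) * (l * (2 * w)) =
      -(ε / m) * (l * (w ^ 2 - r * w)) + S * w * F := by
    field_simp; ring
  rw [e]
  exact h1

/-! ### The gain bound -/

/-- **LMI-certified Lp input–output bound** (Theorem 2, case p ∈ [1, ∞)):
under the LMI feasibility, initial-condition and small-signal hypotheses,
the truncated output y = a satisfies ‖y_τ‖_{Lp} ≤ γ‖f_τ‖_{Lp} + β with
γ = λmax(P)‖2P‖/(λmin(P)ε) and β = ‖a₀‖√(λmax(P)/λmin(P))·(2λmax(P)/(εp))^{1/p}. -/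
theorem lmi_Lp_gain
    {n : ℕ} (L : Matrix (Fin n) (Fin n) ℝ)
    (hHurwitz : ∀ z ∈ spectrum ℂ (L.map (algebraMap ℝ ℂ)), z.re < 0)
    (R : Fin n → Matrix (Fin n) (Fin n) ℝ) (hRsym : ∀ m, (R m)ᵀ = R m)
    (v : Fin n → ℝ)
    (hloss : ∀ a : Fin n → ℝ, a ⬝ᵥ Ups R a = 0)
    (hlossv : ∀ a : Fin n → ℝ, v ⬝ᵥ Ups R a = 0)
    (ε δ : ℝ) (hε : 0 < ε) (hδ : 0 < δ)
    (μ : Fin (n+1) → ℝ) (κ s : Fin n → ℝ)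
    (P : Matrix (Fin n) (Fin n) ℝ) (hPsym : Pᵀ = P)
    (hLMI₁ : (P - ε • (1 : Matrix (Fin n) (Fin n) ℝ)).PosSemidef)
    (hLMI₂ : (-(Gmat L R v ε δ μ κ s P)).PosSemidef)
    (hs : ∀ m, 0 ≤ s m)
    (τ : ℝ) (hτ : 0 < τ)
    (a₀ : Fin n → ℝ) (ha₀ : eNorm a₀ ≤ δ * Real.sqrt (lamMin P / lamMax P))
    (f : ℝ → Fin n → ℝ) (hfc : Continuous f)
    (hfsmall : ∀ t ∈ Icc (0:ℝ) τ,
      eNorm (f t) ≤ lamMin P * ε * δ / (lamMax P * specNorm ((2:ℝ) • P)))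
    (a : ℝ → Fin n → ℝ)
    (hode : ∀ t ∈ Icc (0:ℝ) τ,
      HasDerivWithinAt a (L.mulVec (a t) + Ups R (a t) + f t) (Icc (0:ℝ) τ) t)
    (hinit : a 0 = a₀)
    (p : ℝ) (hp : 1 ≤ p) :
    eLp p (trunc τ a) ≤
      (lamMax P * specNorm ((2:ℝ) • P) / (lamMin P * ε)) * eLp p (trunc τ f)
        + eNorm a₀ * Real.sqrt (lamMax P / lamMin P) * (2 * lamMax P / (ε * p)) ^ (1/p) := by
  -- for `n = 0` both eigenvalues are the junk value `0`, and so are all the norms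
  rcases Nat.eq_zero_or_pos n with rfl | hn
  · have hp0 : p ≠ 0 := by linarith
    simp [eLp, eNorm, lamMax, specNorm, hp0]
  have hl := lamMin_pos hn hε hLMI₁
  have hm : 0 < lamMax P := hl.trans_le (lamMin_le_lamMax hn P)
  have hlm := lamMin_le_lamMax hn P
  have hS := specNorm_nonneg ((2:ℝ) • P)
  have hlow := fun t => lamMin_le_quad P (a t)
  have hup := fun t => quad_le_lamMax P (a t)
  have hNf : ∀ t, 2 * (P *ᵥ a t ⬝ᵥ f t) ≤ specNorm ((2:ℝ) • P) * eNorm (a t) * eNorm (f t) := by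
    intro t
    have h1 := dot_le_eNorm (((2:ℝ) • P) *ᵥ a t) (f t)
    have h2 := mul_le_mul_of_nonneg_right (eNorm_mulVec_le_specNorm ((2:ℝ) • P) (a t))
      (eNorm_nonneg (f t))
    rw [smul_mulVec, smul_dotProduct, smul_eq_mul] at h1
    rw [smul_mulVec] at h2
    linarith
  set l := lamMin P
  set m := lamMax P
  set S := specNorm ((2:ℝ) • P)
  have hac : ContinuousOn a (Icc 0 τ) := fun t ht => (hode t ht).continuousWithinAt
  set V : ℝ → ℝ := fun t => a t ⬝ᵥ P *ᵥ a t with hVdef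
  set V' : ℝ → ℝ := fun t => 2 * (P *ᵥ a t ⬝ᵥ (L *ᵥ a t + Ups R (a t) + f t)) with hV'def
  have hV : ∀ t ∈ Icc 0 τ, HasDerivWithinAt V (V' t) (Icc 0 τ) t := fun t ht =>
    hasDerivWithinAt_quad hPsym (hode t ht)
  set Q : ℝ → ℝ := fun t => ∑ i, s i * eNorm (R i *ᵥ a t) ^ 2 with hQdef
  have hQ0 : ∀ t, 0 ≤ Q t := fun t =>
    Finset.sum_nonneg fun i _ => mul_nonneg (hs i) (sq_nonneg _)
  have hdiss : ∀ t, V' t ≤ -ε * eNorm (a t) ^ 2 + S * eNorm (a t) * eNorm (f t)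
      + (eNorm (a t) ^ 2 - δ ^ 2) * Q t := by
    intro t
    have h1 := lmi_dissipation hRsym hloss hlossv hPsym hLMI₂ hs (a t)
    have h2 := hNf t
    simp only [hV'def]
    rw [dotProduct_add]
    linarith
  have hinv : ∀ t ∈ Icc 0 τ, V t ≤ l * δ ^ 2 := by
    have hQc : ContinuousOn Q (Icc 0 τ) := by
      refine continuousOn_finsetSum _ fun i _ => continuousOn_const.mul (ContinuousOn.pow ?_ 2)
      have : Continuous fun x : Fin n → ℝ => eNorm (R i *ᵥ x) :=
        continuous_eNorm.comp (Continuous.matrix_mulVec continuous_const continuous_id)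
      exact this.comp_continuousOn hac
    obtain ⟨D, hD⟩ := isCompact_Icc.exists_bound_of_continuousOn hQc
    refine sublevel_invariant (K := D / l) hV ?_ ?_
    · have h1 := hup 0
      rw [hinit] at h1
      have h2 : eNorm a₀ ^ 2 ≤ δ ^ 2 * (l / m) := by
        have := pow_le_pow_left₀ (eNorm_nonneg a₀) ha₀ 2
        rwa [mul_pow, Real.sq_sqrt (by positivity)] at this
      have h3 := mul_le_mul_of_nonneg_left h2 hm.le
      have e : m * (δ ^ 2 * (l / m)) = l * δ ^ 2 := by field_simp
      simp only [hVdef, hinit]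
      linarith
    · intro t ht hVt
      have hN0 := eNorm_nonneg (a t)
      have hQD : Q t ≤ D := (le_abs_self _).trans (hD t ht)
      -- outside the ellipsoid `‖a‖` exceeds `δ * l / m`, which is where the small input stops
      -- dominating the linear dissipation
      have hNlow : δ * (l / m) ≤ eNorm (a t) := by
        refine le_of_sq_le_sq ?_ hN0
        have h1 : l * δ ^ 2 ≤ m * eNorm (a t) ^ 2 := hVt.le.trans (hup t)
        have hq : l / m ≤ 1 := (div_le_one hm).mpr hlm
        have hq0 : 0 < l / m := by positivity
        have h2 : δ ^ 2 * (l / m) ≤ eNorm (a t) ^ 2 := by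
          rw [← mul_div_assoc, div_le_iff₀ hm]; linarith
        have h3 : (l / m) ^ 2 ≤ l / m := by nlinarith
        rw [mul_pow]
        exact (mul_le_mul_of_nonneg_left h3 (sq_nonneg δ)).trans h2
      have hSf : S * eNorm (f t) ≤ ε * (δ * (l / m)) := by
        have h1 := mul_le_mul_of_nonneg_left (hfsmall t ht) hS
        refine h1.trans ?_
        rcases hS.eq_or_lt with h | h
        · rw [← h, zero_mul]; positivity
        · apply le_of_eq; field_simp
      have h1 : S * eNorm (a t) * eNorm (f t) ≤ ε * eNorm (a t) ^ 2 := by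
        have := mul_le_mul_of_nonneg_left
          (hSf.trans (mul_le_mul_of_nonneg_left hNlow hε.le)) hN0
        linarith
      have h2 : eNorm (a t) ^ 2 - δ ^ 2 ≤ (V t - l * δ ^ 2) / l := by
        rw [le_div_iff₀ hl]
        have : l * eNorm (a t) ^ 2 ≤ V t := hlow t
        linarith
      have h3 : (eNorm (a t) ^ 2 - δ ^ 2) * Q t ≤ (V t - l * δ ^ 2) / l * D :=
        (mul_le_mul_of_nonneg_right h2 (hQ0 t)).trans
          (mul_le_mul_of_nonneg_left hQD (div_nonneg (by linarith) hl.le))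
      have h4 := hdiss t
      have e : D / l * (V t - l * δ ^ 2) = (V t - l * δ ^ 2) / l * D := by ring
      rw [e]
      linarith
  have hdiss' : ∀ t ∈ Icc 0 τ,
      V' t ≤ -ε * eNorm (a t) ^ 2 + S * eNorm (a t) * eNorm (f t) := by
    intro t ht
    have h1 : l * eNorm (a t) ^ 2 ≤ l * δ ^ 2 := (hlow t).trans (hinv t ht)
    have h2 := le_of_mul_le_mul_left h1 hl
    have h3 := mul_nonneg (sub_nonneg.mpr h2) (hQ0 t)
    have h4 := hdiss t
    linarith
  have hVc : ContinuousOn V (Icc 0 τ) := fun t ht => (hV t ht).continuousWithinAt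
  have hV0 : ∀ t, 0 ≤ V t := fun t => le_trans (by positivity) (hlow t)
  have hfn : Continuous fun t => eNorm (f t) := continuous_eNorm.comp hfc
  have hp0 : 0 < p := by linarith
  rw [eLp_trunc hp, eLp_trunc hp]
  set Gf := (∫ t in Ioc 0 τ, eNorm (f t) ^ p) ^ (1 / p)
  have main : ∀ r : ℝ, 0 < r → (∫ t in Ioc 0 τ, eNorm (a t) ^ p) ^ (1 / p) ≤
      √(V 0 / l + r ^ 2) * (1 / (ε / (2 * m) * p)) ^ (1 / p)
        + (S / (2 * l) * Gf + ε / (2 * m) * r * τ ^ (1 / p)) / (ε / (2 * m)) := by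
    intro r hr
    have hpos : ∀ t, 0 < V t / l + r ^ 2 := fun t => by
      have := hV0 t
      positivity
    have hwc : ContinuousOn (fun t => √(V t / l + r ^ 2)) (Icc 0 τ) :=
      ((hVc.div_const l).add continuousOn_const).sqrt
    refine le_trans ?_ (scalar_gain (w := fun t => √(V t / l + r ^ 2))
      (w' := fun t => V' t / l / (2 * √(V t / l + r ^ 2))) (g := fun t => eNorm (f t))
      hτ (by positivity) (by positivity) (by positivity) hp hwc
      (fun t _ => Real.sqrt_pos.mpr (hpos t)) ?_ hfn.continuousOn (fun t _ => eNorm_nonneg _) ?_)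
    · refine Real.rpow_le_rpow (setIntegral_nonneg measurableSet_Ioc fun t _ =>
        Real.rpow_nonneg (eNorm_nonneg _) _) ?_ (by positivity)
      refine setIntegral_mono_on ?_ ?_ measurableSet_Ioc fun t ht => ?_
      · exact (((continuous_eNorm.comp_continuousOn hac).rpow_const fun _ _ =>
          Or.inr hp0.le).integrableOn_Icc).mono_set Ioc_subset_Icc_self
      · exact ((hwc.rpow_const fun _ _ =>
          Or.inr hp0.le).integrableOn_Icc).mono_set Ioc_subset_Icc_self
      · refine Real.rpow_le_rpow (eNorm_nonneg _) (Real.le_sqrt_of_sq_le ?_) hp0.le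
        have : eNorm (a t) ^ 2 ≤ V t / l := by
          rw [le_div_iff₀ hl, mul_comm]; exact hlow t
        have := sq_nonneg r
        linarith
    · intro t ht
      have h1 := (hV t (Ioo_subset_Icc_self ht)).hasDerivAt (Icc_mem_nhds ht.1 ht.2)
      exact ((h1.div_const l).add_const _).sqrt (hpos t).ne'
    · intro t ht
      exact sqrt_deriv_le hl hm hε hS hr (eNorm_nonneg _) (hlow t) (hup t)
        (hdiss' t (Ioo_subset_Icc_self ht))
  have hlim : (∫ t in Ioc 0 τ, eNorm (a t) ^ p) ^ (1 / p) ≤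
      √(V 0 / l) * (1 / (ε / (2 * m) * p)) ^ (1 / p) + S / (2 * l) * Gf / (ε / (2 * m)) := by
    have hc : Continuous fun r : ℝ => √(V 0 / l + r ^ 2) * (1 / (ε / (2 * m) * p)) ^ (1 / p)
        + (S / (2 * l) * Gf + ε / (2 * m) * r * τ ^ (1 / p)) / (ε / (2 * m)) := by fun_prop
    have ht := (hc.tendsto 0).mono_left (nhdsWithin_le_nhds (s := Ioi 0))
    refine (ge_of_tendsto ht (eventually_mem_nhdsWithin.mono fun r hr => main r hr)).trans
      (le_of_eq ?_)
    simp
  have hw0 : √(V 0 / l) ≤ eNorm a₀ * √(m / l) := by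
    rw [Real.sqrt_le_left (mul_nonneg (eNorm_nonneg _) (Real.sqrt_nonneg _)), mul_pow,
      Real.sq_sqrt (by positivity), ← mul_div_assoc]
    have : V 0 ≤ m * eNorm a₀ ^ 2 := hinit ▸ hup 0
    gcongr
    linarith
  have e1 : 1 / (ε / (2 * m) * p) = 2 * m / (ε * p) := by field_simp
  have e2 : S / (2 * l) * Gf / (ε / (2 * m)) = m * S / (l * ε) * Gf := by field_simp
  rw [e1, e2] at hlim
  have := mul_le_mul_of_nonneg_right hw0
    (Real.rpow_nonneg (show 0 ≤ 2 * m / (ε * p) by positivity) (1 / p))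
  linarith
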